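/- arXiv:2310.03556 — 2 statements merged into one kernel-verified Lean document; each statement's English description precedes it below -/
import Mathlib

section
/- Let d ≥ 1, let N ≥ 2, and let x_1, …, x_N be pairwise distinct points in ℝ^d with m := min_{i ≠ j} ‖x_i − x_j‖ > 0. Then for every bandwidth vector σ ∈ (0, ∞)^N, the leave-one-out total log-likelihood satisfies ∑_{i=1}^N log( ∑_{j ≠ i} K_{σ_j}(x_i, x_j) ) ≤ N · log( (N − 1) · (2π)^{-d/2} · d^{d/2} · e^{-d/2} · m^{-d} ). In particular the LOO-MLL objective for A-KDE is bounded above on (0, ∞)^N. -/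
/-- The isotropic Gaussian kernel on `ℝ^d` with center `μ` and bandwidth `σ`:
`K_σ(x, μ) = (2πσ²)^{-d/2} · exp(−‖x − μ‖² / (2σ²))`. -/
noncomputable def gaussKernel (d : ℕ) (σ : ℝ) (x μ : EuclideanSpace ℝ (Fin d)) : ℝ :=
  (2 * Real.pi * σ ^ 2) ^ (-(d : ℝ) / 2) * Real.exp (-‖x - μ‖ ^ 2 / (2 * σ ^ 2))

/-- The value of `sup_{σ > 0} K_σ(x, μ)` at distance `r = ‖x − μ‖ > 0`, attained at `σ = r / √d`
when `d ≥ 1`. -/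
noncomputable def gaussKernelPeak (d : ℕ) (r : ℝ) : ℝ :=
  (2 * Real.pi) ^ (-(d : ℝ) / 2) * (d : ℝ) ^ ((d : ℝ) / 2) * Real.exp (-(d : ℝ) / 2) *
    r ^ (-(d : ℝ))

theorem rpow_mul_exp_neg_le {p t : ℝ} (hp : 0 ≤ p) (ht : 0 ≤ t) :
    t ^ p * Real.exp (-t) ≤ p ^ p * Real.exp (-p) := by
  obtain rfl | hp := hp.eq_or_lt
  · simpa using ht
  have tangent_line : t / p ≤ Real.exp (t / p - 1) := by
    linarith [Real.add_one_le_exp (t / p - 1)]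
  have ratio_le : t ^ p / p ^ p ≤ Real.exp (t - p) := calc
    t ^ p / p ^ p = (t / p) ^ p := (Real.div_rpow ht hp.le p).symm
    _ ≤ Real.exp (t / p - 1) ^ p := by gcongr
    _ = Real.exp (t - p) := by
      rw [← Real.exp_mul]
      congr 1
      field_simp
  calc t ^ p * Real.exp (-t) ≤ Real.exp (t - p) * p ^ p * Real.exp (-t) := by
        gcongr
        exact (div_le_iff₀ (by positivity)).mp ratio_le
    _ = p ^ p * Real.exp (-p) := by
        rw [mul_comm (Real.exp _), mul_assoc, ← Real.exp_add]
        ring_nf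

theorem gaussKernelPeak_eq_mul_rpow_mul_exp_neg (d : ℕ) {r : ℝ} (hr : 0 ≤ r) :
    gaussKernelPeak d r = (Real.pi * r ^ 2) ^ (-((d : ℝ) / 2)) *
      (((d : ℝ) / 2) ^ ((d : ℝ) / 2) * Real.exp (-((d : ℝ) / 2))) := by
  have rpow_dist : (r ^ 2) ^ (-((d : ℝ) / 2)) = r ^ (-(d : ℝ)) := by
    rw [← Real.rpow_natCast_mul hr]
    congr 1
    push_cast
    ring
  rw [gaussKernelPeak, neg_div, Real.mul_rpow zero_le_two Real.pi_pos.le,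
    Real.mul_rpow Real.pi_pos.le (sq_nonneg r), Real.div_rpow d.cast_nonneg zero_le_two,
    rpow_dist, Real.rpow_neg zero_le_two]
  ring

section Kernel

variable {d : ℕ} {σ : ℝ} {x μ : EuclideanSpace ℝ (Fin d)}

theorem gaussKernel_pos (hσ : σ ≠ 0) : 0 < gaussKernel d σ x μ := by
  unfold gaussKernel
  positivity

-- With `t = ‖x − μ‖² / (2σ²)` the kernel is a `σ`-independent multiple of `t ^ (d/2) * exp (-t)`.
theorem gaussKernel_le_gaussKernelPeak (hσ : σ ≠ 0) (hx : x ≠ μ) :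
    gaussKernel d σ x μ ≤ gaussKernelPeak d ‖x - μ‖ := by
  have hr : 0 < ‖x - μ‖ := norm_sub_pos_iff.mpr hx
  set r := ‖x - μ‖
  set t := r ^ 2 / (2 * σ ^ 2) with ht
  have ht_pos : 0 < t := by positivity
  have scale_eq : 2 * Real.pi * σ ^ 2 = Real.pi * r ^ 2 * t⁻¹ := by
    rw [ht]
    field_simp
  calc gaussKernel d σ x μ
      = (Real.pi * r ^ 2) ^ (-((d : ℝ) / 2)) * (t ^ ((d : ℝ) / 2) * Real.exp (-t)) := by
        rw [gaussKernel, neg_div, neg_div, scale_eq,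
          Real.mul_rpow (by positivity) (by positivity), Real.inv_rpow ht_pos.le,
          Real.rpow_neg ht_pos.le, inv_inv, mul_assoc]
    _ ≤ (Real.pi * r ^ 2) ^ (-((d : ℝ) / 2)) *
          (((d : ℝ) / 2) ^ ((d : ℝ) / 2) * Real.exp (-((d : ℝ) / 2))) :=
        mul_le_mul_of_nonneg_left (rpow_mul_exp_neg_le (by positivity) ht_pos.le) (by positivity)
    _ = gaussKernelPeak d r := (gaussKernelPeak_eq_mul_rpow_mul_exp_neg d hr.le).symm

end Kernel

theorem gaussKernelPeak_antitoneOn (d : ℕ) : AntitoneOn (gaussKernelPeak d) (Set.Ioi 0) := by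
  intro r hr s _ hrs
  have rpow_le : s ^ (-(d : ℝ)) ≤ r ^ (-(d : ℝ)) :=
    Real.rpow_le_rpow_of_nonpos hr hrs (neg_nonpos.mpr d.cast_nonneg)
  unfold gaussKernelPeak
  gcongr

theorem log_sum_gaussKernel_le {ι : Type*} {d : ℕ} {s : Finset ι} (hs : s.Nonempty)
    {y : EuclideanSpace ℝ (Fin d)} {x : ι → EuclideanSpace ℝ (Fin d)} {σ : ι → ℝ} {m : ℝ}
    (hm : 0 < m) (hdist : ∀ j ∈ s, m ≤ ‖y - x j‖) (hσ : ∀ j ∈ s, σ j ≠ 0) :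
    Real.log (∑ j ∈ s, gaussKernel d (σ j) y (x j)) ≤
      Real.log (s.card * gaussKernelPeak d m) := by
  have kernel_le : ∀ j ∈ s, gaussKernel d (σ j) y (x j) ≤ gaussKernelPeak d m := by
    intro j hj
    have hr : 0 < ‖y - x j‖ := hm.trans_le (hdist j hj)
    exact (gaussKernel_le_gaussKernelPeak (hσ j hj) (norm_sub_pos_iff.mp hr)).trans
      (gaussKernelPeak_antitoneOn d hm hr (hdist j hj))
  refine Real.log_le_log (Finset.sum_pos (fun j hj => gaussKernel_pos (hσ j hj)) hs) ?_
  simpa only [nsmul_eq_mul] using Finset.sum_le_card_nsmul s _ _ kernel_le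

theorem akde_loo_mll_bounded_above_general {ι : Type*} [Fintype ι] [DecidableEq ι] [Nontrivial ι]
    {d : ℕ} {x : ι → EuclideanSpace ℝ (Fin d)} {m : ℝ} (hm : 0 < m)
    (hdist : Pairwise fun i j => m ≤ ‖x i - x j‖) {σ : ι → ℝ} (hσ : ∀ j, σ j ≠ 0) :
    ∑ i, Real.log (∑ j ∈ Finset.univ.erase i, gaussKernel d (σ j) (x i) (x j)) ≤
      Fintype.card ι * Real.log ((Fintype.card ι - 1) * gaussKernelPeak d m) := by
  have log_le (i : ι) :
      Real.log (∑ j ∈ Finset.univ.erase i, gaussKernel d (σ j) (x i) (x j)) ≤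
        Real.log ((Fintype.card ι - 1) * gaussKernelPeak d m) := by
    have others_nonempty : (Finset.univ.erase i).Nonempty :=
      Finset.univ_nontrivial.erase_nonempty
    rw [← Finset.card_univ, ← Finset.cast_card_erase_of_mem (Finset.mem_univ i)]
    exact log_sum_gaussKernel_le others_nonempty hm
      (fun j hj => hdist (Finset.ne_of_mem_erase hj).symm) (fun j _ => hσ j)
  simpa only [nsmul_eq_mul, Finset.card_univ] using
    Finset.sum_le_card_nsmul Finset.univ _ _ fun i _ => log_le i

/-- For pairwise distinct data points with minimum pairwise distance `m > 0`, the
leave-one-out total log-likelihood for A-KDE is bounded above by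
`N · log ((N−1) · (2π)^{-d/2} · d^{d/2} · e^{-d/2} · m^{-d})` for every positive
bandwidth vector. -/
theorem akde_loo_mll_bounded_above
    (d N : ℕ) (hd : 1 ≤ d) (hN : 2 ≤ N)
    (x : Fin N → EuclideanSpace ℝ (Fin d)) (hx : Function.Injective x)
    (m : ℝ) (hm : IsLeast {r : ℝ | ∃ i j : Fin N, i ≠ j ∧ r = ‖x i - x j‖} m) (hm0 : 0 < m)
    (σ : Fin N → ℝ) (hσ : ∀ j, 0 < σ j) :
    ∑ i, Real.log (∑ j ∈ Finset.univ.erase i, gaussKernel d (σ j) (x i) (x j)) ≤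
      (N : ℝ) * Real.log (((N : ℝ) - 1) * (2 * Real.pi) ^ (-(d : ℝ) / 2) *
        (d : ℝ) ^ ((d : ℝ) / 2) * Real.exp (-(d : ℝ) / 2) * m ^ (-(d : ℝ))) := by
  have : Nontrivial (Fin N) := Fin.nontrivial_iff_two_le.mpr hN
  simpa only [gaussKernelPeak, mul_assoc, Fintype.card_fin] using
    akde_loo_mll_bounded_above_general hm0 (fun i j hij => hm.2 ⟨i, j, hij, rfl⟩)
      (fun j => (hσ j).ne')
end

section
/- Let d ≥ 1, let N ≥ 2, and let x_1, …, x_N be pairwise distinct points in ℝ^d. Suppose σ* ∈ (0, ∞)^N is a local maximum of the leave-one-out total log-likelihood L_LOO(σ) = ∑_{i=1}^N log( ∑_{j ≠ i} K_{σ_j}(x_i, x_j) ) on (0, ∞)^N. Then for every index j, (σ*_j)² ≥ (1/d) · min_{i ≠ j} ‖x_i − x_j‖² > 0. In particular, data-copying (some σ*_j arbitrarily close to 0) cannot occur at any optimal solution of the LOO-MLL objective when the data points are distinct. -/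
/-! Raising the bandwidth of a Gaussian whose variance lies below `‖x - μ‖² / d` raises its value
at `x`: with `r = ‖x - μ‖²`, the logarithm of the kernel has derivative `(r - d v) / (2 v²)` in the
variance `v`. If every other data point `x_i` satisfied `d σ_j² < ‖x_i - x_j‖²`, a small increase
of `σ_j` alone would thus increase each summand of the likelihood with `i ≠ j` and leave the
summand `i = j` unchanged, because the latter leaves `σ_j` out. -/

open Filter Finset Function Set Topology

/-- The logarithm of a Gaussian kernel in dimension `d` at squared distance `r` from its center, as
a function of the variance `v = σ²` and without the additive constant `-(d / 2) log (2π)`. The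
dimension is taken to be real. -/
noncomputable def gaussianLogProfile (d r v : ℝ) : ℝ :=
  -(d / 2) * Real.log v - r / 2 * v⁻¹

theorem hasDerivAt_gaussianLogProfile (d r : ℝ) {v : ℝ} (hv : v ≠ 0) :
    HasDerivAt (gaussianLogProfile d r) ((r - d * v) / (2 * v ^ 2)) v := by
  refine (((Real.hasDerivAt_log hv).const_mul (-(d / 2))).fun_sub
    ((hasDerivAt_inv hv).const_mul (r / 2))).congr_deriv ?_
  field

theorem strictMonoOn_gaussianLogProfile (d r : ℝ) :
    StrictMonoOn (gaussianLogProfile d r) {v | 0 < v ∧ d * v < r} := by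
  have hconvex : Convex ℝ {v : ℝ | 0 < v ∧ d * v < r} :=
    (convex_Ioi 0).inter (convex_halfSpace_lt (LinearMap.mulLeft ℝ d).isLinear r)
  have hderiv {v : ℝ} (hv : v ∈ {v : ℝ | 0 < v ∧ d * v < r}) :=
    hasDerivAt_gaussianLogProfile d r hv.1.ne'
  refine strictMonoOn_of_hasDerivWithinAt_pos hconvex
    (fun v hv ↦ (hderiv hv).continuousAt.continuousWithinAt)
    (fun v hv ↦ (hderiv (interior_subset hv)).hasDerivWithinAt) fun v hv ↦ ?_
  obtain ⟨hv_pos, hv_lt⟩ := interior_subset hv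
  have := sub_pos.2 hv_lt
  positivity

section gaussKernel

variable {d : ℕ}

theorem gaussKernel_eq_mul_exp {s : ℝ} (hs : s ≠ 0) (x μ : EuclideanSpace ℝ (Fin d)) :
    gaussKernel d s x μ = (2 * Real.pi) ^ (-(d : ℝ) / 2) *
      Real.exp (gaussianLogProfile d (‖x - μ‖ ^ 2) (s ^ 2)) := by
  have hs2 : 0 < s ^ 2 := by positivity
  rw [gaussKernel, gaussianLogProfile, Real.mul_rpow (by positivity) hs2.le,
    Real.rpow_def_of_pos hs2, mul_assoc, ← Real.exp_add]
  congr 2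
  field_simp
  ring

theorem gaussKernel_pos_s9 {s : ℝ} (hs : s ≠ 0) (x μ : EuclideanSpace ℝ (Fin d)) :
    0 < gaussKernel d s x μ := by
  rw [gaussKernel]
  positivity

theorem gaussKernel_lt_gaussKernel {s t : ℝ} {x μ : EuclideanSpace ℝ (Fin d)} (hs : 0 < s)
    (hst : s < t) (ht : d * t ^ 2 < ‖x - μ‖ ^ 2) :
    gaussKernel d s x μ < gaussKernel d t x μ := by
  have ht_pos : 0 < t := hs.trans hst
  have hsq : s ^ 2 < t ^ 2 := by gcongr
  have hs_lt : d * s ^ 2 < ‖x - μ‖ ^ 2 := lt_of_le_of_lt (by gcongr) ht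
  rw [gaussKernel_eq_mul_exp hs.ne', gaussKernel_eq_mul_exp ht_pos.ne']
  gcongr ?_ * Real.exp ?_
  exact strictMonoOn_gaussianLogProfile d _ ⟨by positivity, hs_lt⟩ ⟨by positivity, ht⟩ hsq

end gaussKernel

theorem isLocalMaxOn_comp_update {ι β : Type*} {X : ι → Type*} [DecidableEq ι]
    [∀ i, TopologicalSpace (X i)] [Preorder β] {f : (∀ i, X i) → β} {S : ∀ i, Set (X i)}
    {a : ∀ i, X i} (hf : IsLocalMaxOn f {y | ∀ i, y i ∈ S i} a) (ha : ∀ i, a i ∈ S i) (j : ι) :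
    IsLocalMaxOn (fun t ↦ f (update a j t)) (S j) (a j) := by
  have hmaps : MapsTo (update a j) (S j) {y | ∀ i, y i ∈ S i} := fun t ht ↦
    (forall_update_iff a fun i y ↦ y ∈ S i).2 ⟨ht, fun i _ ↦ ha i⟩
  have hcont : Continuous (update a j) := continuous_const.update j continuous_id
  rw [← update_eq_self j a] at hf
  exact hf.comp_continuousOn hmaps.subset_preimage hcont.continuousOn (ha j)

theorem sum_log_sum_erase_lt_sum_log_sum_erase {ι : Type*} [Fintype ι] [DecidableEq ι]
    {a b : ι → ι → ℝ} (hpos : ∀ i k, k ≠ i → 0 < a i k) (hle : ∀ i k, k ≠ i → a i k ≤ b i k)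
    (hlt : ∃ i k, k ≠ i ∧ a i k < b i k) :
    ∑ i, Real.log (∑ k ∈ univ.erase i, a i k) < ∑ i, Real.log (∑ k ∈ univ.erase i, b i k) := by
  obtain ⟨i₀, k₀, hne, hlt⟩ := hlt
  have : Nontrivial ι := ⟨k₀, i₀, hne⟩
  have hsum_pos (i : ι) : 0 < ∑ k ∈ univ.erase i, a i k :=
    sum_pos (fun k hk ↦ hpos i k (ne_of_mem_erase hk)) univ_nontrivial.erase_nonempty
  refine sum_lt_sum (fun i _ ↦ ?_) ⟨i₀, mem_univ _, ?_⟩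
  · exact Real.log_le_log (hsum_pos i)
      (sum_le_sum fun k hk ↦ hle i k (ne_of_mem_erase hk))
  · exact Real.log_lt_log (hsum_pos i₀)
      (sum_lt_sum (fun k hk ↦ hle i₀ k (ne_of_mem_erase hk)) ⟨k₀, by simpa using hne, hlt⟩)

section looLogLikelihood

variable {ι : Type*} [Fintype ι] [DecidableEq ι] {d : ℕ}

/-- The leave-one-out total log-likelihood `L_LOO` of the data `x`, as a function of the
bandwidths `σ`; the index type is an arbitrary finite type in place of `{1, …, N}`. -/
noncomputable def looLogLikelihood (x : ι → EuclideanSpace ℝ (Fin d)) (σ : ι → ℝ) : ℝ :=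
  ∑ i, Real.log (∑ j ∈ univ.erase i, gaussKernel d (σ j) (x i) (x j))

variable {x : ι → EuclideanSpace ℝ (Fin d)} {σ : ι → ℝ} {j : ι}

theorem looLogLikelihood_lt_update [Nontrivial ι] {t : ℝ} (hσ : ∀ k, 0 < σ k) (hjt : σ j < t)
    (ht : ∀ i, i ≠ j → d * t ^ 2 < ‖x i - x j‖ ^ 2) :
    looLogLikelihood x σ < looLogLikelihood x (update σ j t) := by
  have hkernel (i : ι) (hij : i ≠ j) :
      gaussKernel d (σ j) (x i) (x j) < gaussKernel d (update σ j t j) (x i) (x j) := by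
    rw [update_self]
    exact gaussKernel_lt_gaussKernel (hσ j) hjt (ht i hij)
  obtain ⟨i₀, hi₀⟩ := exists_ne j
  refine sum_log_sum_erase_lt_sum_log_sum_erase (fun i k _ ↦ gaussKernel_pos_s9 (hσ k).ne' _ _)
    (fun i k hki ↦ ?_) ⟨i₀, j, hi₀.symm, hkernel i₀ hi₀⟩
  obtain rfl | hkj := eq_or_ne k j
  · exact (hkernel i hki.symm).le
  · rw [update_of_ne hkj]

theorem exists_sq_norm_sub_le_of_isLocalMaxOn_update [Nontrivial ι] (hσ : ∀ k, 0 < σ k)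
    (hmax : IsLocalMaxOn (fun t ↦ looLogLikelihood x (update σ j t)) (Ici (σ j)) (σ j)) :
    ∃ i, i ≠ j ∧ ‖x i - x j‖ ^ 2 ≤ d * σ j ^ 2 := by
  by_contra! hlt
  have hlt_near : ∀ᶠ t in 𝓝[>] σ j, ∀ i, i ≠ j → d * t ^ 2 < ‖x i - x j‖ ^ 2 := by
    refine eventually_all.2 fun i ↦ eventually_imp_distrib_left.2 fun hij ↦ ?_
    have hcont : Continuous fun t : ℝ ↦ d * t ^ 2 := by fun_prop
    exact nhdsWithin_le_nhds (hcont.tendsto (σ j) |>.eventually_lt_const (hlt i hij))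
  have hle_near : ∀ᶠ t in 𝓝[>] σ j, looLogLikelihood x (update σ j t) ≤ looLogLikelihood x σ := by
    simpa only [IsLocalMaxOn, IsMaxFilter, update_eq_self]
      using hmax.on_subset Ioi_subset_Ici_self
  obtain ⟨t, ⟨hle, ht⟩, hjt⟩ := (hle_near.and hlt_near).and self_mem_nhdsWithin |>.exists
  exact hle.not_gt (looLogLikelihood_lt_update hσ hjt ht)

theorem akde_loo_no_data_copying_at_local_max_general (hσ : ∀ k, 0 < σ k)
    (hx : ∀ i, i ≠ j → x i ≠ x j)
    (hmax : IsLocalMaxOn (fun t ↦ looLogLikelihood x (update σ j t)) (Ici (σ j)) (σ j))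
    {m : ℝ} (hm : IsLeast {r : ℝ | ∃ i, i ≠ j ∧ r = ‖x i - x j‖ ^ 2} m) :
    1 / (d : ℝ) * m ≤ σ j ^ 2 ∧ 0 < 1 / (d : ℝ) * m := by
  obtain ⟨⟨i₀, hi₀, rfl⟩, hleast⟩ := hm
  have : Nontrivial ι := ⟨i₀, j, hi₀⟩
  obtain ⟨i, hij, hi⟩ := exists_sq_norm_sub_le_of_isLocalMaxOn_update hσ hmax
  have hbound : ‖x i₀ - x j‖ ^ 2 ≤ d * σ j ^ 2 := (hleast ⟨i, hij, rfl⟩).trans hi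
  have hm_pos : 0 < ‖x i₀ - x j‖ ^ 2 := by
    have := sub_ne_zero.2 (hx i₀ hi₀)
    positivity
  have hd : (0 : ℝ) < d := pos_of_mul_pos_left (hm_pos.trans_le hbound) (sq_nonneg _)
  refine ⟨?_, by positivity⟩
  rwa [one_div, inv_mul_le_iff₀ hd]

end looLogLikelihood

/-- If `σ*` is a local maximum of the leave-one-out total log-likelihood for A-KDE on the
set of positive bandwidth vectors and the data points are pairwise distinct, then for every
index `j`, `(σ*_j)² ≥ (1/d) · min_{i ≠ j} ‖x_i − x_j‖² > 0`; in particular data-copying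
cannot occur at any optimal solution of the LOO-MLL objective. -/
theorem akde_loo_no_data_copying_at_local_max
    (d N : ℕ) (hd : 1 ≤ d) (hN : 2 ≤ N)
    (x : Fin N → EuclideanSpace ℝ (Fin d)) (hx : Function.Injective x)
    (σs : Fin N → ℝ) (hσs : ∀ j, 0 < σs j)
    (hmax : IsLocalMaxOn
      (fun σ : Fin N → ℝ =>
        ∑ i, Real.log (∑ j ∈ Finset.univ.erase i, gaussKernel d (σ j) (x i) (x j)))
      {σ : Fin N → ℝ | ∀ j, 0 < σ j} σs) :
    ∀ j : Fin N, ∀ m2 : ℝ,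
      IsLeast {r : ℝ | ∃ i : Fin N, i ≠ j ∧ r = ‖x i - x j‖ ^ 2} m2 →
        (1 / (d : ℝ)) * m2 ≤ (σs j) ^ 2 ∧ 0 < (1 / (d : ℝ)) * m2 := by
  intro j m2 hm
  exact akde_loo_no_data_copying_at_local_max_general hσs (fun i hij ↦ hx.ne hij)
    ((isLocalMaxOn_comp_update (S := fun _ ↦ Ioi 0) hmax hσs j).on_subset
      (Ici_subset_Ioi.2 (hσs j))) hm
end
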